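/- Let X = ℝ with its standard topology, let I be an ideal on ℕ, let r : ℝ → [0,∞) be a bounded upper semicontinuous function, and let 𝓕 be the rough family given by F_η = [η − r(η), η + r(η)] for all η ∈ ℝ. Then the map x ↦ Lim_x(I,𝓕) from c^b(I,𝓕) to the nonempty closed subsets of ℝ is continuous for the upper Vietoris topology: for every x ∈ c^b(I,𝓕) and every open set U ⊆ ℝ with Lim_x(I,𝓕) ⊆ U, there exists ε > 0 such that Lim_y(I,𝓕) ⊆ U for all y ∈ c^b(I,𝓕) with ‖x − y‖_∞ < ε. -/

import Mathlib

open Set Filter Topology Metric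

def IsIdeal (I : Set (Set ℕ)) : Prop :=
  (∀ A B : Set ℕ, A ⊆ B → B ∈ I → A ∈ I) ∧
  (∀ A B : Set ℕ, A ∈ I → B ∈ I → A ∪ B ∈ I) ∧
  (∀ A : Set ℕ, A.Finite → A ∈ I) ∧
  (Set.univ : Set ℕ) ∉ I

def IsRoughFamily {X : Type*} (F : X → Set X) : Prop :=
  ∀ η : X, η ∈ F η

def RoughLim {X : Type*} [TopologicalSpace X] (I : Set (Set ℕ)) (F : X → Set X)
    (x : ℕ → X) : Set X :=
  {η : X | ∀ U : Set X, IsOpen U → F η ⊆ U → {n : ℕ | x n ∉ U} ∈ I}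

def RoughLimStar {X : Type*} [TopologicalSpace X] (I : Set (Set ℕ)) (F : X → Set X)
    (x : ℕ → X) : Set X :=
  {η : X | ∃ S ∈ I, ∀ U : Set X, IsOpen U → F η ⊆ U → {n : ℕ | n ∉ S ∧ x n ∉ U}.Finite}

def RoughCluster {X : Type*} [TopologicalSpace X] (I : Set (Set ℕ)) (F : X → Set X)
    (x : ℕ → X) : Set X :=
  {η : X | ∀ U : Set X, IsOpen U → F η ⊆ U → {n : ℕ | x n ∈ U} ∉ I}

def RoughLimitPts {X : Type*} [TopologicalSpace X] (I : Set (Set ℕ)) (F : X → Set X)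
    (x : ℕ → X) : Set X :=
  {η : X | ∃ S : Set ℕ, S ∉ I ∧ ∀ U : Set X, IsOpen U → F η ⊆ U → {n ∈ S | x n ∉ U}.Finite}

def IClusterPts {X : Type*} [TopologicalSpace X] (I : Set (Set ℕ)) (x : ℕ → X) : Set X :=
  RoughCluster I (fun η => {η}) x

def ILimitPts {X : Type*} [TopologicalSpace X] (I : Set (Set ℕ)) (x : ℕ → X) : Set X :=
  RoughLimitPts I (fun η => {η}) x

def IsPIdeal (I : Set (Set ℕ)) : Prop :=
  ∀ S : ℕ → Set ℕ, Monotone S → (∀ j, S j ∈ I) → ∃ T ∈ I, ∀ j, (S j \ T).Finite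

def IsPPlusIdeal (I : Set (Set ℕ)) : Prop :=
  ∀ A : ℕ → Set ℕ, Antitone A → (∀ k, A k ∉ I) → ∃ B : Set ℕ, B ∉ I ∧ ∀ k, (B \ A k).Finite

def HasUCProperty (X : Type*) [MetricSpace X] : Prop :=
  ∀ F G : Set X, IsClosed F → IsClosed G → F.Nonempty → G.Nonempty → Disjoint F G →
    ∃ ε : ℝ, 0 < ε ∧ ∀ x ∈ F, ∀ y ∈ G, ε < dist x y

def UpperVietorisContinuous {X : Type*} [TopologicalSpace X] (F : X → Set X) : Prop :=
  ∀ η : X, ∀ U : Set X, IsOpen U → F η ⊆ U →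
    ∃ V : Set X, IsOpen V ∧ η ∈ V ∧ ∀ lam ∈ V, F lam ⊆ U

/-!
Through the filter dual to `I`, membership `η ∈ Lim_x(I, 𝓕)` says that `x` tends to the
neighbourhood filter of `F η`. If this fails for `x` and `η`, then it fails for all sequences
uniformly close to `x` and all points close to `η`, because `F η` is compact and `F` is upper
hemicontinuous: the graph of `x ↦ Lim_x(I, 𝓕)` is closed. Since `F η` must meet every closed set
containing the values of the sequence, and `F η` lies within a fixed distance of `η`, the limit sets
of nearby bounded sequences stay in one compact set, where a closed graph implies upper
hemicontinuity. The same closed graph criterion shows that `η ↦ closedBall η (r η)` is upper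
hemicontinuous.
-/

section Hemicontinuity

variable {T X : Type*} [TopologicalSpace T]

theorem upperHemicontinuousAt_of_eventually_notMem [TopologicalSpace X] {f : T → Set X} {t : T}
    {K : Set X} (hK : IsCompact K) (hfK : ∀ᶠ s in 𝓝 t, f s ⊆ K)
    (hgraph : ∀ η ∉ f t, ∀ᶠ p : T × X in 𝓝 (t, η), p.2 ∉ f p.1) :
    UpperHemicontinuousAt f t := by
  refine .of_forall_isOpen fun U hU hfU ↦ ?_
  have havoid : ∀ᶠ s in 𝓝 t, ∀ η ∈ K \ U, η ∉ f s :=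
    (hK.diff hU).eventually_forall_of_forall_eventually fun η hη ↦
      hgraph η fun hηf ↦ hη.2 (hfU hηf)
  filter_upwards [hfK, havoid] with s hsK hs η hη
  by_contra hηU
  exact hs η ⟨hsK hη, hηU⟩ hη

theorem upperHemicontinuousAt_closedBall [PseudoMetricSpace X] [ProperSpace X] {r : X → ℝ} {η : X}
    (hr : UpperSemicontinuousAt r η) :
    UpperHemicontinuousAt (fun ζ ↦ closedBall ζ (r ζ)) η := by
  refine upperHemicontinuousAt_of_eventually_notMem
    (isCompact_closedBall η (r η + 1 + 1)) ?_ fun z hz ↦ ?_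
  · filter_upwards [hr (r η + 1) (lt_add_one _), ball_mem_nhds η one_pos] with ζ hrζ hζ
    exact closedBall_subset_closedBall' (add_le_add hrζ.le (mem_ball.1 hζ).le)
  · obtain ⟨c, hrc, hcz⟩ := exists_between (not_le.1 (mem_closedBall.not.1 hz))
    have hr_lt : ∀ᶠ p : X × X in 𝓝 (η, z), r p.1 < c :=
      (continuousAt_fst (p := (η, z))).eventually (hr c hrc)
    have hdist_gt : ∀ᶠ p : X × X in 𝓝 (η, z), c < dist p.2 p.1 :=
      (continuous_snd.dist continuous_fst).continuousAt.eventually_const_lt hcz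
    filter_upwards [hr_lt, hdist_gt] with p hpr hpd
    exact mem_closedBall.not.2 (hpr.trans hpd).not_ge

end Hemicontinuity

section NhdsSetLimits

variable {ι T X : Type*} {l : Filter ι}

theorem inter_nonempty_of_tendsto_nhdsSet [TopologicalSpace X] [l.NeBot] {u : ι → X} {A C : Set X}
    (hu : Tendsto u l (𝓝ˢ A)) (hC : IsClosed C) (huC : ∀ᶠ n in l, u n ∈ C) :
    (A ∩ C).Nonempty := by
  by_contra hAC
  have hACc : A ⊆ Cᶜ := fun a haA haC ↦ hAC ⟨a, haA, haC⟩
  have huCc : ∀ᶠ n in l, u n ∈ Cᶜ := hu.eventually (hC.isOpen_compl.mem_nhdsSet.2 hACc)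
  obtain ⟨n, hnC, hnCc⟩ := (huC.and huCc).exists
  exact hnCc hnC

variable [PseudoMetricSpace X] {F : X → Set X}

theorem eventually_not_tendsto_nhdsSet {p : Filter T} {u : T → ι → X} {v : ι → X} {η : X}
    (hu : TendstoUniformlyOnFilter u v p l) (hFη : IsCompact (F η))
    (hF : UpperHemicontinuousAt F η) (hv : ¬ Tendsto v l (𝓝ˢ (F η))) :
    ∀ᶠ q in p ×ˢ 𝓝 η, ¬ Tendsto (u q.1) l (𝓝ˢ (F q.2)) := by
  simp only [(hasBasis_nhdsSet_thickening hFη).tendsto_right_iff, not_forall] at hv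
  obtain ⟨δ, hδ, hvδ⟩ := hv
  have hclose : ∀ᶠ t in p, ∀ᶠ n in l, dist (v n) (u t n) < δ / 2 :=
    (Metric.tendstoUniformlyOnFilter_iff.1 hu (δ / 2) (half_pos hδ)).curry
  have hnear : ∀ᶠ ζ in 𝓝 η, F ζ ⊆ thickening (δ / 2) (F η) :=
    hF.forall_isOpen _ isOpen_thickening (self_subset_thickening (half_pos hδ) _)
  filter_upwards [hclose.prod_mk hnear] with ⟨t, ζ⟩ ⟨hvu, hζ⟩ hut
  have hu_mem : ∀ᶠ n in l, u t n ∈ thickening (δ / 2) (F η) :=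
    hut.eventually (isOpen_thickening.mem_nhdsSet.2 hζ)
  refine hvδ ?_
  filter_upwards [hvu, hu_mem] with n hvun hun
  rw [← add_halves δ]
  exact thickening_thickening_subset _ _ _ (mem_thickening_iff.2 ⟨u t n, hun, hvun⟩)

theorem upperHemicontinuousAt_setOf_tendsto_nhdsSet [TopologicalSpace T] [ProperSpace X] [l.NeBot]
    (hFc : ∀ η, IsCompact (F η)) (hF : UpperHemicontinuous F) {M : ℝ}
    (hFM : ∀ η, F η ⊆ closedBall η M) {u : T → ι → X} {t : T}
    (hu : TendstoUniformly u (u t) (𝓝 t)) (hut : Bornology.IsBounded (range (u t))) :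
    UpperHemicontinuousAt (fun s ↦ {η | Tendsto (u s) l (𝓝ˢ (F η))}) t := by
  let C : Set X := cthickening 1 (range (u t))
  have hCM : IsCompact (cthickening M C) :=
    isCompact_of_isClosed_isBounded isClosed_cthickening hut.cthickening.cthickening
  refine upperHemicontinuousAt_of_eventually_notMem hCM ?_ fun η hη ↦ ?_
  · filter_upwards [Metric.tendstoUniformly_iff.1 hu 1 one_pos] with s hs η hη
    have husC : ∀ n, u s n ∈ C := fun n ↦
      mem_cthickening_of_dist_le _ (u t n) _ _ (mem_range_self n) (dist_comm (u s n) _ ▸ (hs n).le)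
    obtain ⟨z, hzF, hzC⟩ :=
      inter_nonempty_of_tendsto_nhdsSet hη isClosed_cthickening (.of_forall husC)
    exact mem_cthickening_of_dist_le η z M C hzC (mem_closedBall'.1 (hFM η hzF))
  · rw [nhds_prod_eq]
    exact eventually_not_tendsto_nhdsSet (hu.tendstoUniformlyOnFilter.mono_right le_top)
      (hFc η) (hF η) hη

end NhdsSetLimits

namespace IsIdeal

variable {I : Set (Set ℕ)}

/-- The filter dual to an ideal: the complements of its members. It turns `I`-convergence into
convergence along a filter. -/
def dualFilter (hI : IsIdeal I) : Filter ℕ :=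
  Filter.comk (· ∈ I) (hI.2.2.1 ∅ finite_empty) (fun B hB A hAB ↦ hI.1 A B hAB hB)
    fun A hA B hB ↦ hI.2.1 A B hA hB

theorem mem_dualFilter (hI : IsIdeal I) {A : Set ℕ} : A ∈ hI.dualFilter ↔ Aᶜ ∈ I :=
  Iff.rfl

theorem neBot_dualFilter (hI : IsIdeal I) : hI.dualFilter.NeBot := by
  rw [neBot_iff, Ne, ← empty_mem_iff_bot, mem_dualFilter, compl_empty]
  exact hI.2.2.2

theorem roughLim_eq_setOf_tendsto {X : Type*} [TopologicalSpace X] (hI : IsIdeal I)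
    (F : X → Set X) (x : ℕ → X) :
    RoughLim I F x = {η | Tendsto x hI.dualFilter (𝓝ˢ (F η))} := by
  ext η
  simp only [RoughLim, mem_ofPred_eq, (hasBasis_nhdsSet (F η)).tendsto_right_iff, and_imp,
    Filter.Eventually, mem_dualFilter, compl_ofPred]

end IsIdeal

section Lp

variable {ι E : Type*} [NormedAddCommGroup E] {p : ENNReal}

theorem tendstoUniformly_lp_apply [Fact (1 ≤ p)] (x : lp (fun _ : ι ↦ E) p) :
    TendstoUniformly (fun (y : lp (fun _ : ι ↦ E) p) i ↦ y i) x (𝓝 x) := by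
  refine Metric.tendstoUniformly_iff.2 fun ε hε ↦ ?_
  filter_upwards [ball_mem_nhds x hε] with y hy i
  exact ((lp.lipschitzWith_one_eval p i).dist_le_mul x y).trans_lt
    (by simpa using mem_ball'.1 hy)

theorem isBounded_range_lp (hp : p ≠ 0) (x : lp (fun _ : ι ↦ E) p) :
    Bornology.IsBounded (range x) :=
  isBounded_iff_forall_norm_le.2 ⟨‖x‖, forall_mem_range.2 (lp.norm_apply_le_norm hp x)⟩

end Lp

theorem stmt17_general {E : Type*} [NormedAddCommGroup E] [ProperSpace E] {I : Set (Set ℕ)}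
    (hI : IsIdeal I) {r : E → ℝ} {M : ℝ} (hrM : ∀ η, r η ≤ M) (hr : UpperSemicontinuous r) :
    UpperHemicontinuous fun x : lp (fun _ : ℕ ↦ E) ⊤ ↦
      RoughLim I (fun η ↦ closedBall η (r η)) (fun n ↦ x n) := by
  have := hI.neBot_dualFilter
  simp only [hI.roughLim_eq_setOf_tendsto]
  exact fun x ↦ upperHemicontinuousAt_setOf_tendsto_nhdsSet
    (fun η ↦ isCompact_closedBall η (r η))
    (fun η ↦ upperHemicontinuousAt_closedBall (hr η))
    (fun η ↦ closedBall_subset_closedBall (hrM η))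
    (tendstoUniformly_lp_apply x) (isBounded_range_lp ENNReal.top_ne_zero x)

theorem stmt17 (I : Set (Set ℕ)) (hI : IsIdeal I)
    (r : ℝ → ℝ) (hr0 : ∀ η : ℝ, 0 ≤ r η) (hrbd : ∃ M : ℝ, ∀ η : ℝ, r η ≤ M)
    (hr : UpperSemicontinuous r)
    (F : ℝ → Set ℝ) (hF : ∀ η : ℝ, F η = Set.Icc (η - r η) (η + r η)) :
    ∀ x : lp (fun _ : ℕ => ℝ) ⊤, (RoughLim I F (fun n => x n)).Nonempty →
      ∀ U : Set ℝ, IsOpen U → RoughLim I F (fun n => x n) ⊆ U →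
        ∃ ε : ℝ, 0 < ε ∧ ∀ y : lp (fun _ : ℕ => ℝ) ⊤,
          (RoughLim I F (fun n => y n)).Nonempty → ‖x - y‖ < ε →
            RoughLim I F (fun n => y n) ⊆ U := by
  intro x _ U hU hxU
  obtain rfl : F = fun η ↦ closedBall η (r η) := funext fun η ↦ by rw [hF, Real.closedBall_eq_Icc]
  obtain ⟨M, hM⟩ := hrbd
  have huhc := (stmt17_general hI hM hr).forall_isOpen x U hU hxU
  obtain ⟨ε, hε, hball⟩ := Metric.eventually_nhds_iff.1 huhc
  exact ⟨ε, hε, fun y _ hxy ↦ hball (by rwa [dist_comm, dist_eq_norm])⟩
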